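/- For every k ≥ 0 the complexity at word length |p_k| + 1 is given exactly by C(|p_k| + 1) = (#A_k − 1)·(|p_k| + 1) + 𝟙_{A_{k+1}}(a_k)·(|p_{k−1}| + 1). -/

import Mathlib

/-!
Write `N = |p k| + 1` and `M = |p (k-1)| + 1`. Every long block has the form `p y₁ p y₂ ⋯ yₘ p` with
`p = p k` and letters `yᵢ ∈ A_{k+1}`, and every such letter occurs. A window of length `N` in such
a word is a suffix of some `p yᵢ` followed by a prefix of `p`, that is, a rotation of `p yᵢ`; all
rotations of `p yᵢ` occur as windows of `p yᵢ p`. Hence the words of length `N` in the language are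
the rotations of the words `p k x` with `x ∈ A_{k+1}`. Different letters `x` give disjoint classes,
and the size of a class is the rotation period of `p k x`, so it remains to find these periods.

The word `p k (a k)` is the power `(p (k-1) (a k)) ^ n k`, so it has the rotation period of
`p (k-1) (a k)`. If `x ≠ a k`, then `p k x` differs from `p k (a k)` in a single letter, and two
cyclic words that differ in a single letter cannot both have a nontrivial rotation symmetry: hence
`p k x` has period `N`. Since `a k ≠ a (k-1)`, the same result one level down shows that
`p (k-1) (a k)`, and with it `p k (a k)`, has period `M`. So each of the `#A_k - 1` letters of `A_k`
other than `a k` contributes `N` words, and `a k` contributes `M` words if it lies in `A_{k+1}`.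
-/

open Filter

/-- The blocks `p k` of the simple Toeplitz subshift coded by `a` and `n`:
`p 0 = a 0 ^ (n 0 - 1)` and `p (k+1)` consists of `n (k+1)` copies of `p k`
separated by `n (k+1) - 1` single letters `a (k+1)`. -/
def ToeplitzBlock {A : Type*} (a : ℕ → A) (n : ℕ → ℕ) : ℕ → List A
  | 0 => List.replicate (n 0 - 1) (a 0)
  | k + 1 => List.intercalate [a (k + 1)] (List.replicate (n (k + 1)) (ToeplitzBlock a n k))

/-- `lenPrev a n k = |p (k-1)|`, with the convention `|p (-1)| = 0`. -/
def lenPrev {A : Type*} (a : ℕ → A) (n : ℕ → ℕ) : ℕ → ℕ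
  | 0 => 0
  | k + 1 => (ToeplitzBlock a n k).length

/-- The language of the simple Toeplitz subshift: all finite words occurring as a
factor of some block `p k`. -/
def ToeplitzLang {A : Type*} (a : ℕ → A) (n : ℕ → ℕ) : Set (List A) :=
  {u | ∃ k, u <:+: ToeplitzBlock a n k}

/-- The complexity function `C L`. -/
noncomputable def cmpl {A : Type*} (a : ℕ → A) (n : ℕ → ℕ) (L : ℕ) : ℕ :=
  Set.ncard {u | u ∈ ToeplitzLang a n ∧ u.length = L}

/-- The palindrome complexity function `P L`. -/
noncomputable def palCmpl {A : Type*} (a : ℕ → A) (n : ℕ → ℕ) (L : ℕ) : ℕ :=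
  Set.ncard {u | u ∈ ToeplitzLang a n ∧ u.length = L ∧ u.reverse = u}

/-- `Ak a k = {a j : j ≥ k}`. -/
def Ak {A : Type*} (a : ℕ → A) (k : ℕ) : Set A := {x | ∃ j, k ≤ j ∧ a j = x}

/-- The eventual alphabet `A_ev = ⋂ k, A_k`. -/
def Aev {A : Type*} (a : ℕ → A) : Set A := ⋂ k, Ak a k

/-- `Kf a k = min {j > k : {a (k+1), …, a j} = A (k+1)}`. -/
noncomputable def Kf {A : Type*} (a : ℕ → A) (k : ℕ) : ℕ :=
  sInf {j | k < j ∧ {x | ∃ i, k + 1 ≤ i ∧ i ≤ j ∧ a i = x} = Ak a (k + 1)}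

/-- The positions `m i` at which `Kf` increases: `m 0 = 0` and
`m (i+1) = min {j > m i : Kf j > Kf (m i)}`. -/
noncomputable def mseq {A : Type*} (a : ℕ → A) : ℕ → ℕ
  | 0 => 0
  | i + 1 => sInf {j | mseq a i < j ∧ Kf a (mseq a i) < Kf a j}

/-- The repetitivity function `R L`: the least `L'` such that every word of
length `L` of the language is a factor of every word of length `L'`. -/
noncomputable def repet {A : Type*} (a : ℕ → A) (n : ℕ → ℕ) (L : ℕ) : ℕ :=
  sInf {L' | ∀ u ∈ ToeplitzLang a n, u.length = L →
    ∀ w ∈ ToeplitzLang a n, w.length = L' → u <:+: w}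

section RotationPeriod

variable {A : Type*}

/-- The number of one-letter rotations needed to return to the word `w` for the first time; the
empty word has period `1`. -/
noncomputable def rotationPeriod (w : List A) : ℕ :=
  Function.minimalPeriod (fun l : List A => l.rotate 1) w

lemma iterate_rotate_one (w : List A) (d : ℕ) :
    (fun l : List A => l.rotate 1)^[d] w = w.rotate d := by
  induction d with
  | zero => simp
  | succ d ih => rw [Function.iterate_succ_apply', ih, List.rotate_rotate]

lemma isPeriodicPt_rotate_one_iff {w : List A} {d : ℕ} :
    Function.IsPeriodicPt (fun l : List A => l.rotate 1) d w ↔ w.rotate d = w := by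
  rw [Function.IsPeriodicPt, Function.IsFixedPt, iterate_rotate_one]

lemma rotationPeriod_dvd_iff {w : List A} {d : ℕ} : rotationPeriod w ∣ d ↔ w.rotate d = w := by
  rw [rotationPeriod, ← Function.isPeriodicPt_iff_minimalPeriod_dvd, isPeriodicPt_rotate_one_iff]

lemma rotationPeriod_eq_rotationPeriod_iff {v w : List A} :
    rotationPeriod v = rotationPeriod w ↔ ∀ d, v.rotate d = v ↔ w.rotate d = w := by
  simp only [rotationPeriod, Function.minimalPeriod_eq_minimalPeriod_iff,
    isPeriodicPt_rotate_one_iff]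

lemma rotationPeriod_dvd_length (w : List A) : rotationPeriod w ∣ w.length :=
  rotationPeriod_dvd_iff.2 w.rotate_length

lemma rotationPeriod_pos (w : List A) : 0 < rotationPeriod w := by
  rcases eq_or_ne w [] with rfl | hw
  · exact Nat.pos_of_dvd_of_pos (rotationPeriod_dvd_iff.2 (List.rotate_nil 1)) one_pos
  · exact Nat.pos_of_dvd_of_pos (rotationPeriod_dvd_length w) (List.length_pos_of_ne_nil hw)

lemma setOf_isRotated_eq_image (w : List A) :
    {u | u ~r w} = w.rotate '' Set.Iio (rotationPeriod w) := by
  ext u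
  constructor
  · intro (hu : u ~r w)
    obtain ⟨d, rfl⟩ := hu.symm
    refine ⟨d % rotationPeriod w, Nat.mod_lt _ (rotationPeriod_pos w), ?_⟩
    rw [← iterate_rotate_one, ← iterate_rotate_one]
    exact Function.iterate_mod_minimalPeriod_eq
  · rintro ⟨d, -, rfl⟩
    exact List.IsRotated.forall w d

lemma finite_setOf_isRotated (w : List A) : {u | u ~r w}.Finite :=
  setOf_isRotated_eq_image w ▸ (Set.finite_Iio _).image _

lemma ncard_setOf_isRotated (w : List A) : {u | u ~r w}.ncard = rotationPeriod w := by
  have hinj : Set.InjOn w.rotate (Set.Iio (rotationPeriod w)) := fun i hi j hj h =>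
    Function.iterate_injOn_Iio_minimalPeriod hi hj (by simpa only [iterate_rotate_one] using h)
  rw [setOf_isRotated_eq_image, hinj.ncard_image, ← Finset.coe_Iio, Set.ncard_coe_finset,
    Nat.card_Iio]

end RotationPeriod

section WordPow

variable {A : Type*}

/-- The power `w ^ m` of a word for concatenation. -/
def wordPow (w : List A) (m : ℕ) : List A := (List.replicate m w).flatten

lemma wordPow_succ (w : List A) (m : ℕ) : wordPow w (m + 1) = w ++ wordPow w m := by
  simp [wordPow, List.replicate_succ]

lemma length_wordPow (w : List A) (m : ℕ) : (wordPow w m).length = m * w.length := by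
  simp [wordPow]

lemma wordPow_append_comm (s t : List A) (m : ℕ) :
    wordPow (s ++ t) m ++ s = s ++ wordPow (t ++ s) m := by
  induction m with
  | zero => simp [wordPow]
  | succ m ih => rw [wordPow_succ, wordPow_succ, List.append_assoc, ih]; simp

lemma eq_of_wordPow_eq_of_length_eq {m : ℕ} (hm : 0 < m) {v w : List A} (hl : v.length = w.length)
    (h : wordPow v m = wordPow w m) : v = w := by
  obtain ⟨m, rfl⟩ := Nat.exists_eq_add_of_lt hm
  rw [zero_add, wordPow_succ, wordPow_succ] at h
  exact List.append_inj_left h hl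

lemma rotate_one_wordPow (w : List A) (m : ℕ) :
    (wordPow w m).rotate 1 = wordPow (w.rotate 1) m := by
  cases w with
  | nil => simp [wordPow]
  | cons x t =>
    cases m with
    | zero => simp [wordPow]
    | succ m =>
      have hcomm := wordPow_append_comm [x] t m
      simp only [List.singleton_append] at hcomm
      simp [wordPow_succ, hcomm]

lemma rotate_wordPow (w : List A) (m d : ℕ) : (wordPow w m).rotate d = wordPow (w.rotate d) m := by
  induction d with
  | zero => simp
  | succ d ih => rw [← List.rotate_rotate, ih, rotate_one_wordPow, List.rotate_rotate]

lemma rotationPeriod_wordPow (w : List A) {m : ℕ} (hm : 0 < m) :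
    rotationPeriod (wordPow w m) = rotationPeriod w := by
  refine rotationPeriod_eq_rotationPeriod_iff.2 fun d => ?_
  rw [rotate_wordPow]
  exact ⟨eq_of_wordPow_eq_of_length_eq hm (w.length_rotate d), fun h => by rw [h]⟩

end WordPow

section LastLetter

variable {A : Type*}

/- Moving from `e` by `d`, then by `M`, and in the other order, compares the values `x` and `g e` at
`e + d + M`, unless this is `e` itself. -/
lemma eq_of_periodic_update {G : Type*} [AddCancelCommMonoid G] [DecidableEq G] {g : G → A}
    {d M e : G} {x : A} (hM : M ≠ 0) (hg : Function.Periodic g M) (hd : d ≠ 0)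
    (hf : Function.Periodic (Function.update g e x) d) : x = g e := by
  have hgd : g (e + d) = x := by
    simpa [hd] using hf e
  have hfM : Function.update g e x (e + M) = g e := by
    simpa [hM] using hg e
  have hfMd : Function.update g e x (e + d + M) = g e := by
    rw [add_right_comm, hf, hfM]
  by_cases he : e + d + M = e
  · simpa [he] using hfMd
  · rw [← hfMd, Function.update_of_ne he, hg, hgd]

/- The letters are read through `l[i]?` to have words of equal but not definitionally equal
lengths give functions of the same type. -/
lemma periodic_getElem?_of_rotate_eq_self {l : List A} {N d : ℕ} [NeZero N] (hN : l.length = N)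
    (h : l.rotate d = l) : Function.Periodic (fun i : ZMod N => l[i.val]?) d := by
  intro i
  have hi : i.val < l.length := hN ▸ i.val_lt
  have hrot := List.getElem?_rotate (n := d) hi
  rw [h, hN] at hrot
  simp only [hrot, ZMod.val_add, ZMod.val_natCast, Nat.add_mod_mod]

lemma getElem?_concat_eq_update (p : List A) (c x : A) :
    (fun i : ZMod (p.length + 1) => (p ++ [x])[i.val]?) =
      Function.update (fun i : ZMod (p.length + 1) => (p ++ [c])[i.val]?) p.length (some x) := by
  have hval : (p.length : ZMod (p.length + 1)).val = p.length :=
    ZMod.val_natCast_of_lt p.length.lt_succ_self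
  refine Function.eq_update_iff.2 ⟨by simp [hval], fun i hi => ?_⟩
  have hne : i.val ≠ p.length := fun h =>
    hi ((ZMod.natCast_zmod_val i).symm.trans (congrArg _ h))
  have hlt : i.val < p.length := lt_of_le_of_ne (Nat.lt_succ_iff.1 i.val_lt) hne
  simp only [List.getElem?_append_left hlt]

lemma rotationPeriod_concat_of_ne {p : List A} {c x : A} (hx : x ≠ c)
    (hc : rotationPeriod (p ++ [c]) ≠ p.length + 1) :
    rotationPeriod (p ++ [x]) = p.length + 1 := by
  by_contra hper
  have hcast : ∀ {y : A}, rotationPeriod (p ++ [y]) ≠ p.length + 1 →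
      (rotationPeriod (p ++ [y]) : ZMod (p.length + 1)) ≠ 0 := fun {y} hy h =>
    hy (Nat.dvd_antisymm (by simpa using rotationPeriod_dvd_length (p ++ [y]))
      ((ZMod.natCast_eq_zero_iff _ _).1 h))
  have hperiodic : ∀ y : A, Function.Periodic
      (fun i : ZMod (p.length + 1) => (p ++ [y])[i.val]?) (rotationPeriod (p ++ [y])) := fun y =>
    periodic_getElem?_of_rotate_eq_self (by simp) (rotationPeriod_dvd_iff.1 dvd_rfl)
  have hupdate := hperiodic x
  rw [getElem?_concat_eq_update p c x] at hupdate
  have heq := eq_of_periodic_update (hcast hc) (hperiodic c) (hcast hper) hupdate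
  rw [ZMod.val_natCast_of_lt p.length.lt_succ_self] at heq
  exact hx (by simpa using heq)

lemma concat_isRotated_concat_iff {p : List A} {x y : A} : p ++ [x] ~r p ++ [y] ↔ x = y := by
  refine ⟨fun h => ?_, fun h => h ▸ List.IsRotated.refl _⟩
  simpa using (List.perm_append_left_iff p).1 h.perm

end LastLetter

section Interleave

variable {A : Type*}

/-- The word `p w₁ p w₂ p ⋯ p wₘ p`, for a word `p` and a word `w` with letters `w₁, …, wₘ`. -/
def interleave (p w : List A) : List A := p ++ w.flatMap (fun x => x :: p)

lemma interleave_nil_left (w : List A) : interleave [] w = w := by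
  simp [interleave]

lemma interleave_nil_right (p : List A) : interleave p [] = p := by
  simp [interleave]

lemma interleave_append_cons (p v w : List A) (x : A) :
    interleave p (v ++ x :: w) = interleave p v ++ x :: interleave p w := by
  simp [interleave]

lemma interleave_cons (p w : List A) (x : A) :
    interleave p (x :: w) = p ++ x :: interleave p w := by
  simp [interleave]

lemma interleave_assoc (p v w : List A) :
    interleave (interleave p v) w = interleave p (interleave v w) := by
  induction w with
  | nil => simp only [interleave_nil_right]
  | cons x w ih => simp only [interleave_cons, interleave_append_cons, ih]

lemma mem_interleave {p w : List A} {x : A} : x ∈ interleave p w ↔ x ∈ p ∨ x ∈ w := by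
  simp only [interleave, List.mem_append, List.mem_flatMap, List.mem_cons]
  grind

lemma prefix_interleave (p w : List A) : p <+: interleave p w := List.prefix_append _ _

lemma suffix_interleave (p w : List A) : p <:+ interleave p w := by
  induction w with
  | nil => rw [interleave_nil_right]
  | cons x w ih =>
    rw [interleave_cons]
    exact (ih.trans (List.suffix_cons _ _)).trans (List.suffix_append _ _)

lemma intercalate_replicate_succ (p : List A) (x : A) (m : ℕ) :
    List.intercalate [x] (List.replicate (m + 1) p) = interleave p (List.replicate m x) := by
  induction m with
  | zero => simp [List.intercalate, interleave]
  | succ m ih =>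
    rw [List.replicate_succ (n := m), interleave_cons, ← ih]
    simp [List.replicate_succ, List.intercalate]

lemma interleave_replicate_concat (p : List A) (x : A) (m : ℕ) :
    interleave p (List.replicate m x) ++ [x] = wordPow (p ++ [x]) (m + 1) := by
  induction m with
  | zero => simp [wordPow, interleave]
  | succ m ih => rw [wordPow_succ, ← ih, List.replicate_succ, interleave_cons]; simp

lemma infix_of_isRotated_concat {p u : List A} {x : A} (h : u ~r p ++ [x]) :
    u <:+: (p ++ [x]) ++ p := by
  obtain ⟨i, hi, rfl⟩ := List.isRotated_iff_mod.1 h.symm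
  rcases hi.eq_or_lt with rfl | hlt
  · rw [List.rotate_length]
    exact List.infix_append_left
  · have hip : i ≤ p.length := by simpa [Nat.lt_succ_iff] using hlt
    rw [List.rotate_eq_drop_append_take hi, List.take_append_of_le_length hip]
    exact List.infix_append_iff.2
      (.inr (.inr ⟨_, _, rfl, List.drop_suffix _ _, List.take_prefix _ _⟩))

lemma exists_isRotated_of_infix_interleave {p w u : List A} (hu : u.length = p.length + 1)
    (h : u <:+: interleave p w) : ∃ x ∈ w, u ~r p ++ [x] := by
  induction w with
  | nil =>
    rw [interleave_nil_right] at h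
    have := h.length_le
    omega
  | cons x w ih =>
    rw [interleave_cons, List.append_cons, List.infix_append_iff_ne_nil] at h
    rcases h with h | h | ⟨s, t, hs, -, rfl, ⟨r, hr⟩, ht⟩
    · rw [h.eq_of_length (by simpa using hu)]
      exact ⟨x, List.mem_cons_self, List.IsRotated.refl _⟩
    · obtain ⟨y, hy, hrot⟩ := ih h
      exact ⟨y, List.mem_cons_of_mem _ hy, hrot⟩
    · -- `p x = r s` and `u = s t`, where `r` and `t` are prefixes of `interleave p w` of the
      -- same length, so `u = s r`.
      have hlen : r.length + s.length = p.length + 1 := by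
        simpa using congrArg List.length hr
      have hs_pos := List.length_pos_of_ne_nil hs
      rw [List.length_append] at hu
      have hrp : r <+: p := List.prefix_of_prefix_length_le
        (hr ▸ List.prefix_append r s) (List.prefix_append p [x]) (by omega)
      have hrt : r = t := (List.prefix_of_prefix_length_le
        (hrp.trans (prefix_interleave p w)) ht (by omega)).eq_of_length (by omega)
      exact ⟨x, List.mem_cons_self, by rw [← hr, ← hrt]; exact List.isRotated_append⟩

lemma infix_interleave_iff {p w u : List A} (hu : u.length = p.length + 1) :
    u <:+: interleave p w ↔ ∃ x ∈ w, u ~r p ++ [x] := by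
  refine ⟨exists_isRotated_of_infix_interleave hu, ?_⟩
  rintro ⟨x, hx, hrot⟩
  obtain ⟨v, v', rfl⟩ := List.append_of_mem hx
  obtain ⟨s, hs⟩ := suffix_interleave p v
  obtain ⟨t, ht⟩ := prefix_interleave p v'
  refine (infix_of_isRotated_concat hrot).trans ⟨s, t, ?_⟩
  rw [interleave_append_cons, ← hs, ← ht]
  simp

end Interleave

namespace ToeplitzBlock

variable {A : Type*} {a : ℕ → A} {n : ℕ → ℕ}

/-- The block `p (k-1)`, with `p (-1)` the empty word. -/
def prev (a : ℕ → A) (n : ℕ → ℕ) : ℕ → List A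
  | 0 => []
  | k + 1 => ToeplitzBlock a n k

lemma length_prev (k : ℕ) : (prev a n k).length = lenPrev a n k := by
  cases k <;> rfl

lemma eq_interleave_prev {k : ℕ} (hn : 0 < n k) :
    ToeplitzBlock a n k = interleave (prev a n k) (List.replicate (n k - 1) (a k)) := by
  cases k with
  | zero => rw [prev, interleave_nil_left, ToeplitzBlock]
  | succ k => rw [prev, ← intercalate_replicate_succ, Nat.sub_add_cancel hn, ToeplitzBlock]

lemma concat_eq_wordPow {k : ℕ} (hn : 0 < n k) :
    ToeplitzBlock a n k ++ [a k] = wordPow (prev a n k ++ [a k]) (n k) := by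
  rw [eq_interleave_prev hn, interleave_replicate_concat, Nat.sub_add_cancel hn]

lemma rotationPeriod_concat_self {k : ℕ} (hn : 0 < n k) :
    rotationPeriod (ToeplitzBlock a n k ++ [a k]) = rotationPeriod (prev a n k ++ [a k]) := by
  rw [concat_eq_wordPow hn, rotationPeriod_wordPow _ hn]

lemma rotationPeriod_concat_self_ne {k : ℕ} (hn : 2 ≤ n k) :
    rotationPeriod (ToeplitzBlock a n k ++ [a k]) ≠ (ToeplitzBlock a n k).length + 1 := by
  have hle : rotationPeriod (ToeplitzBlock a n k ++ [a k]) ≤ (prev a n k).length + 1 := by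
    rw [rotationPeriod_concat_self (by omega)]
    exact Nat.le_of_dvd (Nat.succ_pos _)
      (by simpa using rotationPeriod_dvd_length (prev a n k ++ [a k]))
  have hlen : (ToeplitzBlock a n k).length + 1 = n k * ((prev a n k).length + 1) := by
    simpa [length_wordPow] using congrArg List.length (concat_eq_wordPow (a := a) (by omega))
  have hmul := Nat.mul_le_mul_right ((prev a n k).length + 1) hn
  omega

lemma rotationPeriod_concat_of_ne {k : ℕ} (hn : 2 ≤ n k) {x : A} (hx : x ≠ a k) :
    rotationPeriod (ToeplitzBlock a n k ++ [x]) = (ToeplitzBlock a n k).length + 1 :=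
  _root_.rotationPeriod_concat_of_ne hx (rotationPeriod_concat_self_ne hn)

lemma rotationPeriod_prev_concat (hn : ∀ j, 2 ≤ n j) {k : ℕ} (ha : ∀ j, j + 1 = k → a j ≠ a k) :
    rotationPeriod (prev a n k ++ [a k]) = (prev a n k).length + 1 := by
  cases k with
  | zero => exact Nat.dvd_one.1 (rotationPeriod_dvd_length [a 0])
  | succ k => exact rotationPeriod_concat_of_ne (hn k) (ha k rfl).symm

lemma add_eq_interleave (hn : ∀ j, 0 < n j) (k m : ℕ) :
    ToeplitzBlock a n (k + 1 + m) = interleave (ToeplitzBlock a n k)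
      (ToeplitzBlock (fun i => a (k + 1 + i)) (fun i => n (k + 1 + i)) m) := by
  induction m with
  | zero => exact eq_interleave_prev (hn (k + 1))
  | succ m ih =>
    rw [eq_interleave_prev (n := fun i => n (k + 1 + i)) (hn _), ← interleave_assoc, prev, ← ih]
    exact eq_interleave_prev (hn (k + 1 + m + 1))

lemma mem_iff (hn : ∀ j, 2 ≤ n j) {m : ℕ} {x : A} :
    x ∈ ToeplitzBlock a n m ↔ ∃ i ≤ m, a i = x := by
  have hpos : ∀ j, n j - 1 ≠ 0 := fun j => by have := hn j; omega
  induction m with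
  | zero => simp [ToeplitzBlock, hpos, eq_comm]
  | succ m ih =>
    rw [eq_interleave_prev (two_pos.trans_le (hn (m + 1))), prev, mem_interleave]
    simp [ih, hpos, Nat.le_succ_iff_eq_or_le, or_and_right, exists_or, or_comm, eq_comm]

lemma infix_of_le (hn : ∀ j, 0 < n j) {j k : ℕ} (h : j ≤ k) :
    ToeplitzBlock a n j <:+: ToeplitzBlock a n k := by
  induction k, h using Nat.le_induction with
  | base => exact List.infix_rfl
  | succ k _ ih =>
    rw [eq_interleave_prev (hn (k + 1))]
    exact ih.trans (prefix_interleave _ _).isInfix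

end ToeplitzBlock

section Complexity

variable {A : Type*} {a : ℕ → A} {n : ℕ → ℕ}

lemma mem_ToeplitzLang_iff (hn : ∀ j, 0 < n j) (k : ℕ) {u : List A} :
    u ∈ ToeplitzLang a n ↔ ∃ m, u <:+: interleave (ToeplitzBlock a n k)
      (ToeplitzBlock (fun i => a (k + 1 + i)) (fun i => n (k + 1 + i)) m) := by
  simp only [← ToeplitzBlock.add_eq_interleave hn]
  constructor
  · rintro ⟨j, hj⟩
    exact ⟨j, hj.trans (ToeplitzBlock.infix_of_le hn (Nat.le_add_left j (k + 1)))⟩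
  · rintro ⟨m, hm⟩
    exact ⟨_, hm⟩

lemma mem_Ak_iff {k : ℕ} {x : A} : x ∈ Ak a k ↔ ∃ i, a (k + i) = x := by
  simp only [Ak, Set.mem_ofPred_eq, le_iff_exists_add]
  grind

lemma setOf_mem_ToeplitzLang_length_eq (hn : ∀ j, 2 ≤ n j) (k : ℕ) :
    {u | u ∈ ToeplitzLang a n ∧ u.length = (ToeplitzBlock a n k).length + 1} =
      ⋃ x ∈ Ak a (k + 1), {u | u ~r ToeplitzBlock a n k ++ [x]} := by
  have hpos : ∀ j, 0 < n j := fun j => two_pos.trans_le (hn j)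
  ext u
  simp only [Set.mem_ofPred_eq, Set.mem_iUnion, mem_Ak_iff, exists_prop]
  constructor
  · rintro ⟨hu, hlen⟩
    obtain ⟨m, hm⟩ := (mem_ToeplitzLang_iff hpos k).1 hu
    obtain ⟨x, hx, hrot⟩ := (infix_interleave_iff hlen).1 hm
    obtain ⟨i, -, hi⟩ := (ToeplitzBlock.mem_iff fun _ => hn _).1 hx
    exact ⟨x, ⟨i, hi⟩, hrot⟩
  · rintro ⟨x, ⟨i, hi⟩, hrot⟩
    have hlen : u.length = (ToeplitzBlock a n k).length + 1 := by simpa using hrot.perm.length_eq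
    have hx := (ToeplitzBlock.mem_iff (a := fun j => a (k + 1 + j)) fun j => hn (k + 1 + j)).2
      ⟨i, le_rfl, hi⟩
    exact ⟨(mem_ToeplitzLang_iff hpos k).2 ⟨i, (infix_interleave_iff hlen).2 ⟨x, hx, hrot⟩⟩, hlen⟩

lemma cmpl_eq_finsum_rotationPeriod (hn : ∀ j, 2 ≤ n j) {k : ℕ} (hfin : (Ak a (k + 1)).Finite) :
    cmpl a n ((ToeplitzBlock a n k).length + 1) =
      ∑ᶠ x ∈ Ak a (k + 1), rotationPeriod (ToeplitzBlock a n k ++ [x]) := by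
  have hdisj : (Ak a (k + 1)).PairwiseDisjoint fun x => {u | u ~r ToeplitzBlock a n k ++ [x]} :=
    fun x _ y _ hxy => Set.disjoint_left.2 fun u hux huy =>
      hxy (concat_isRotated_concat_iff.1 (hux.symm.trans huy))
  rw [cmpl, setOf_mem_ToeplitzLang_length_eq hn,
    hfin.ncard_biUnion (fun _ _ => finite_setOf_isRotated _) hdisj]
  simp only [ncard_setOf_isRotated]

lemma Ak_eq_insert (a : ℕ → A) (k : ℕ) : Ak a k = insert (a k) (Ak a (k + 1)) := by
  ext x
  rw [Set.mem_insert_iff, mem_Ak_iff, mem_Ak_iff, ← Nat.or_exists_add_one]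
  simp only [add_zero, add_assoc, add_comm 1, eq_comm]

lemma finsum_mem_rotationPeriod_of_notMem {k : ℕ} (hn : 2 ≤ n k) {s : Set A} (hfin : s.Finite)
    (hs : a k ∉ s) :
    ∑ᶠ x ∈ s, rotationPeriod (ToeplitzBlock a n k ++ [x]) =
      s.ncard * ((ToeplitzBlock a n k).length + 1) := by
  rw [finsum_mem_congr rfl fun x hx =>
    ToeplitzBlock.rotationPeriod_concat_of_ne hn (ne_of_mem_of_not_mem hx hs),
    finsum_mem_eq_finite_toFinset_sum _ hfin, Finset.sum_const, smul_eq_mul,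
    Set.ncard_eq_toFinset_card s hfin]

end Complexity

open Classical in
theorem stmt6_general {A : Type*} (a : ℕ → A) (n : ℕ → ℕ) (hn : ∀ j, 2 ≤ n j) (k : ℕ)
    (ha : ∀ j, j + 1 = k → a j ≠ a k) (hfin : (Ak a k).Finite) :
    (cmpl a n ((ToeplitzBlock a n k).length + 1) : ℤ) =
      (((Ak a k).ncard : ℤ) - 1) * (((ToeplitzBlock a n k).length : ℤ) + 1) +
        (if a k ∈ Ak a (k + 1) then 1 else 0) * ((lenPrev a n k : ℤ) + 1) := by
  have hself : rotationPeriod (ToeplitzBlock a n k ++ [a k]) = lenPrev a n k + 1 := by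
    rw [ToeplitzBlock.rotationPeriod_concat_self (two_pos.trans_le (hn k)),
      ToeplitzBlock.rotationPeriod_prev_concat hn ha, ToeplitzBlock.length_prev]
  rw [Ak_eq_insert] at hfin ⊢
  have hfin' : (Ak a (k + 1)).Finite := hfin.subset (Set.subset_insert _ _)
  rw [cmpl_eq_finsum_rotationPeriod hn hfin']
  by_cases hk : a k ∈ Ak a (k + 1)
  · rw [Set.insert_eq_of_mem hk] at hfin ⊢
    have herase : a k ∉ Ak a (k + 1) \ {a k} := fun h => h.2 rfl
    rw [← Set.insert_sdiff_self_of_mem hk, finsum_mem_insert _ herase hfin.sdiff, hself,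
      finsum_mem_rotationPeriod_of_notMem (hn k) hfin.sdiff herase,
      Set.ncard_insert_of_notMem herase hfin.sdiff, if_pos (Set.mem_insert _ _)]
    push_cast
    ring
  · rw [finsum_mem_rotationPeriod_of_notMem (hn k) hfin' hk, if_neg hk,
      Set.ncard_insert_of_notMem hk hfin']
    push_cast
    ring

/- STATEMENT 6: the exact value of the complexity at word length `|p k| + 1`. -/
open Classical in
theorem stmt6 {A : Type*} [Fintype A] [Nonempty A]
    (a : ℕ → A) (n : ℕ → ℕ) (hn : ∀ k, 2 ≤ n k) (ha : ∀ k, a k ≠ a (k + 1))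
    (hAev : 2 ≤ (Aev a).ncard) (k : ℕ) :
    (cmpl a n ((ToeplitzBlock a n k).length + 1) : ℤ) =
      (((Ak a k).ncard : ℤ) - 1) * (((ToeplitzBlock a n k).length : ℤ) + 1) +
        (if a k ∈ Ak a (k + 1) then 1 else 0) * ((lenPrev a n k : ℤ) + 1) :=
  stmt6_general a n hn k (fun j hj => hj ▸ ha j) (Set.toFinite _)
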